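/- Palm variance correction estimate (Lemma 4.7): fix θ with −√2 < θ < √2 and R ∈ ℕ. With x_θ^N = x/N + θ and T = T^N_{r,∞}(x) = { y ∈ ℝ : r/N ≤ |x_θ^N − y| }, one has lim_{r→∞} limsup_{N→∞} sup_{|x| < R} | ∫_T (1/(N |x_θ^N − y|²)) · L^N(x_θ^N, y)² / L^N(x_θ^N, x_θ^N) dy + ∬_{T × T} (1/((x_θ^N − y)(x_θ^N − z))) · { 2 L^N(y,z) L^N(x_θ^N, y) L^N(x_θ^N, z) / L^N(x_θ^N, x_θ^N) − L^N(x_θ^N, y)² L^N(x_θ^N, z)² / L^N(x_θ^N, x_θ^N)² } dy dz | = 0. -/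

import Mathlib

open Real MeasureTheory Filter Set

/-- Physicists' Hermite polynomial `H_n(x) = (-1)^n e^{x^2} (d/dx)^n e^{-x^2}`. -/
noncomputable def hermiteP (n : ℕ) (x : ℝ) : ℝ :=
  (-1 : ℝ) ^ n * Real.exp (x ^ 2) * iteratedDeriv n (fun t => Real.exp (-t ^ 2)) x

/-- Oscillator wave function `ψ_n(x) = (√π 2^n n!)^{-1/2} e^{-x^2/2} H_n(x)`. -/
noncomputable def osc (n : ℕ) (x : ℝ) : ℝ :=
  (Real.sqrt (Real.sqrt Real.pi * 2 ^ n * (n.factorial : ℝ)))⁻¹ *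
    Real.exp (-x ^ 2 / 2) * hermiteP n x

/-- The kernel `K^N(x,y) = Σ_{k=0}^{N-1} ψ_k(x) ψ_k(y)`. -/
noncomputable def kerK (N : ℕ) (x y : ℝ) : ℝ :=
  ∑ k ∈ Finset.range N, osc k x * osc k y

/-- The rescaled kernel `L^N(x,y) = N^{-1/2} K^N(√N x, √N y)`. -/
noncomputable def kerL (N : ℕ) (x y : ℝ) : ℝ :=
  (Real.sqrt (N : ℝ))⁻¹ * kerK N (Real.sqrt (N : ℝ) * x) (Real.sqrt (N : ℝ) * y)

/-- Recursive polynomials agreeing with `hermiteP`. -/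
noncomputable def hp : ℕ → Polynomial ℝ
  | 0 => 1
  | n + 1 => 2 * Polynomial.X * hp n - Polynomial.derivative (hp n)

lemma hp_succ (n : ℕ) : hp (n + 1) = 2 * Polynomial.X * hp n - Polynomial.derivative (hp n) := rfl

lemma hasDerivAt_polyGauss (p : Polynomial ℝ) (x : ℝ) :
    HasDerivAt (fun t => p.eval t * Real.exp (-t ^ 2))
      ((Polynomial.derivative p - 2 * Polynomial.X * p).eval x * Real.exp (-x ^ 2)) x := by
  have h1 := p.hasDerivAt x
  have h2 : HasDerivAt (fun t : ℝ => Real.exp (-t ^ 2)) (Real.exp (-x ^ 2) * (-(2 * x))) x := by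
    have := ((hasDerivAt_pow 2 x).neg).exp
    simpa using this
  refine (h1.mul h2).congr_deriv ?_
  simp only [Polynomial.eval_sub, Polynomial.eval_mul, Polynomial.eval_X, Polynomial.eval_ofNat]
  ring

lemma iteratedDeriv_gauss (n : ℕ) :
    iteratedDeriv n (fun t : ℝ => Real.exp (-t ^ 2)) =
      fun x => (-1 : ℝ) ^ n * ((hp n).eval x * Real.exp (-x ^ 2)) := by
  induction n with
  | zero => ext x; simp [hp]
  | succ n ih =>
    rw [iteratedDeriv_succ, ih]
    ext x
    rw [((hasDerivAt_polyGauss (hp n) x).const_mul ((-1 : ℝ) ^ n)).deriv, hp_succ]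
    simp only [Polynomial.eval_sub]
    ring

lemma hermiteP_eq (n : ℕ) (x : ℝ) : hermiteP n x = (hp n).eval x := by
  unfold hermiteP
  rw [iteratedDeriv_gauss]
  have h1 : ((-1 : ℝ) ^ n) * (-1) ^ n = 1 := by
    rw [← mul_pow]; simp
  have h2 : Real.exp (x ^ 2) * Real.exp (-x ^ 2) = 1 := by
    rw [← Real.exp_add]; simp
  calc _ = (((-1 : ℝ) ^ n) * (-1) ^ n) * (Real.exp (x ^ 2) * Real.exp (-x ^ 2)) * (hp n).eval x := by
        ring
    _ = _ := by rw [h1, h2]; ring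

lemma integrable_polyGauss (p : Polynomial ℝ) :
    Integrable (fun x : ℝ => p.eval x * Real.exp (-x ^ 2)) := by
  induction p using Polynomial.induction_on' with
  | add p q hp hq =>
    refine (hp.add hq).congr (Eventually.of_forall fun x => ?_)
    simp [add_mul]
  | monomial n c =>
    have := (integrable_rpow_mul_exp_neg_mul_sq (b := 1) one_pos (s := n)
      (by have : (0 : ℝ) ≤ n := n.cast_nonneg
          linarith)).const_mul c
    refine this.congr (Eventually.of_forall fun x => ?_)
    simp [mul_assoc]

lemma derivative_hp (n : ℕ) :
    Polynomial.derivative (hp (n + 1)) = Polynomial.C (2 * ((n : ℝ) + 1)) * hp n := by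
  induction n with
  | zero =>
    simp [hp]
    rfl
  | succ n ih =>
    rw [hp_succ (n + 1)]
    have h2 : Polynomial.derivative (2 : Polynomial ℝ) = 0 := Polynomial.derivative_ofNat 2
    simp only [Polynomial.derivative_sub, Polynomial.derivative_mul, Polynomial.derivative_X, h2]
    rw [ih]
    simp only [Polynomial.derivative_mul, Polynomial.derivative_C]
    rw [hp_succ n]
    have : (Polynomial.C (2 * (((n + 1 : ℕ) : ℝ) + 1)) : Polynomial ℝ)
        = Polynomial.C (2 * ((n : ℝ) + 1)) + 2 := by
      have : (2 * (((n + 1 : ℕ) : ℝ) + 1)) = 2 * ((n : ℝ) + 1) + 2 := by push_cast; ring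
      rw [this, Polynomial.C_add]
      rfl
    rw [this]
    ring

lemma integral_parts (q : Polynomial ℝ) (n : ℕ) :
    ∫ x : ℝ, (q * hp (n + 1)).eval x * Real.exp (-x ^ 2) =
      ∫ x : ℝ, (Polynomial.derivative q * hp n).eval x * Real.exp (-x ^ 2) := by
  have h := integral_eq_zero_of_hasDerivAt_of_integrable
    (fun x => hasDerivAt_polyGauss (q * hp n) x)
    (integrable_polyGauss _) (integrable_polyGauss _)
  have e : Polynomial.derivative (q * hp n) - 2 * Polynomial.X * (q * hp n)
      = Polynomial.derivative q * hp n - q * hp (n + 1) := by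
    rw [hp_succ, Polynomial.derivative_mul]; ring
  rw [e] at h
  simp only [Polynomial.eval_sub, sub_mul] at h
  rw [integral_sub (integrable_polyGauss _) (integrable_polyGauss _)] at h
  linarith

lemma integral_hp (m n : ℕ) :
    ∫ x : ℝ, (hp m * hp n).eval x * Real.exp (-x ^ 2) =
      if m = n then Real.sqrt Real.pi * 2 ^ n * (n.factorial : ℝ) else 0 := by
  induction m generalizing n with
  | zero =>
    cases n with
    | zero =>
      have := integral_gaussian 1
      simpa [hp] using this
    | succ n =>
      rw [integral_parts]
      simp [hp]
  | succ m ih =>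
    cases n with
    | zero =>
      rw [mul_comm, integral_parts]
      simp [hp]
    | succ n =>
      rw [integral_parts, derivative_hp]
      have : ∀ x : ℝ, (Polynomial.C (2 * ((m : ℝ) + 1)) * hp m * hp n).eval x * Real.exp (-x ^ 2)
          = (2 * ((m : ℝ) + 1)) * ((hp m * hp n).eval x * Real.exp (-x ^ 2)) := by
        intro x
        simp only [Polynomial.eval_mul, Polynomial.eval_C]
        ring
      simp only [this]
      rw [integral_const_mul, ih]
      by_cases h : m = n
      · subst h
        simp [Nat.factorial_succ, pow_succ]
        ring
      · simp [h]

lemma osc_mul (j k : ℕ) (x : ℝ) : osc j x * osc k x =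
    ((Real.sqrt (Real.sqrt Real.pi * 2 ^ j * (j.factorial : ℝ)))⁻¹ *
      (Real.sqrt (Real.sqrt Real.pi * 2 ^ k * (k.factorial : ℝ)))⁻¹) *
      ((hp j * hp k).eval x * Real.exp (-x ^ 2)) := by
  unfold osc
  rw [hermiteP_eq, hermiteP_eq, Polynomial.eval_mul]
  have : Real.exp (-x ^ 2) = Real.exp (-x ^ 2 / 2) * Real.exp (-x ^ 2 / 2) := by
    rw [← Real.exp_add]; ring_nf
  rw [this]
  ring

lemma osc_integrable (j k : ℕ) : Integrable (fun x => osc j x * osc k x) := by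
  simp only [osc_mul]
  exact (integrable_polyGauss _).const_mul _

lemma osc_integral (j k : ℕ) : ∫ x, osc j x * osc k x = if j = k then 1 else 0 := by
  simp only [osc_mul]
  rw [integral_const_mul, integral_hp]
  by_cases h : j = k
  · subst h
    have hpos : 0 < Real.sqrt Real.pi * 2 ^ j * (j.factorial : ℝ) := by positivity
    rw [if_pos rfl, if_pos rfl, ← mul_inv, Real.mul_self_sqrt hpos.le]
    exact inv_mul_cancel₀ hpos.ne'
  · simp [h]

lemma osc_continuous (k : ℕ) : Continuous (osc k) := by
  have : osc k = fun x => (Real.sqrt (Real.sqrt Real.pi * 2 ^ k * (k.factorial : ℝ)))⁻¹ *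
    Real.exp (-x ^ 2 / 2) * (hp k).eval x := by
    ext x
    rw [osc, hermiteP_eq]
  rw [this]
  have := (hp k).continuous
  fun_prop

/-- Bessel's inequality. -/
lemma bessel (n : ℕ) (e : ℕ → ℝ → ℝ) (s : ℝ) (hs : 0 < s)
    (hi : ∀ j k, Integrable (fun y => e j y * e k y))
    (ho : ∀ j k, ∫ y, e j y * e k y = if j = k then s⁻¹ else 0)
    (f : ℝ → ℝ) (hf : Integrable (fun y => f y * f y)) (hfe : ∀ k, Integrable (fun y => f y * e k y)) :
    s * ∑ k ∈ Finset.range n, (∫ y, f y * e k y) ^ 2 ≤ ∫ y, f y * f y := by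
  set c : ℕ → ℝ := fun k => ∫ y, f y * e k y with hc
  have h0 : 0 ≤ ∫ y, (f y - ∑ k ∈ Finset.range n, s * c k * e k y) ^ 2 :=
    integral_nonneg fun y => sq_nonneg _
  have hexp : ∀ y, (f y - ∑ k ∈ Finset.range n, s * c k * e k y) ^ 2 =
      (f y * f y - ∑ k ∈ Finset.range n, (2 * s * c k) * (f y * e k y)) +
        ∑ j ∈ Finset.range n, ∑ k ∈ Finset.range n, (s * c j * (s * c k)) * (e j y * e k y) := by
    intro y
    have h1 : (∑ k ∈ Finset.range n, s * c k * e k y) ^ 2 =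
        ∑ j ∈ Finset.range n, ∑ k ∈ Finset.range n, (s * c j * (s * c k)) * (e j y * e k y) := by
      rw [sq, Finset.sum_mul_sum]
      exact Finset.sum_congr rfl fun _ _ => Finset.sum_congr rfl fun _ _ => by ring
    have h2 : ∑ k ∈ Finset.range n, (2 * s * c k) * (f y * e k y) =
        2 * f y * ∑ k ∈ Finset.range n, s * c k * e k y := by
      rw [Finset.mul_sum]
      exact Finset.sum_congr rfl fun _ _ => by ring
    rw [h2, ← h1]; ring
  have i1 : Integrable (fun y => ∑ k ∈ Finset.range n, (2 * s * c k) * (f y * e k y)) :=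
    integrable_finsetSum _ fun k _ => (hfe k).const_mul _
  have i2 : Integrable (fun y => ∑ j ∈ Finset.range n, ∑ k ∈ Finset.range n,
      (s * c j * (s * c k)) * (e j y * e k y)) :=
    integrable_finsetSum _ fun j _ => integrable_finsetSum _ fun k _ => (hi j k).const_mul _
  simp only [hexp] at h0
  have i3 : Integrable (fun y => f y * f y -
      ∑ k ∈ Finset.range n, (2 * s * c k) * (f y * e k y)) := hf.sub i1
  rw [integral_add i3 i2, integral_sub hf i1,
    integral_finsetSum _ (fun k _ => (hfe k).const_mul _),
    integral_finsetSum _ (fun j _ => integrable_finsetSum _ fun k _ => (hi j k).const_mul _)] at h0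
  have h3 : ∀ j ∈ Finset.range n, ∫ y, ∑ k ∈ Finset.range n,
      (s * c j * (s * c k)) * (e j y * e k y) = s * c j ^ 2 := by
    intro j hj
    rw [integral_finsetSum _ (fun k _ => (hi j k).const_mul _)]
    simp only [integral_const_mul, ho]
    simp only [mul_ite, mul_zero, Finset.sum_ite_eq, hj, if_true]
    field_simp
  rw [Finset.sum_congr rfl h3] at h0
  have h4 : ∑ k ∈ Finset.range n, ∫ y, (2 * s * c k) * (f y * e k y) =
      2 * (s * ∑ k ∈ Finset.range n, c k ^ 2) := by
    rw [Finset.mul_sum, Finset.mul_sum]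
    refine Finset.sum_congr rfl fun k _ => ?_
    rw [integral_const_mul]
    show 2 * s * c k * c k = _
    ring
  rw [h4, ← Finset.mul_sum] at h0
  linarith

lemma abstract_bound (n : ℕ) (e : ℕ → ℝ → ℝ) (s : ℝ) (hs : 0 < s)
    (hm : ∀ k, Measurable (e k))
    (hi : ∀ j k, Integrable (fun y => e j y * e k y))
    (ho : ∀ j k, ∫ y, e j y * e k y = if j = k then s⁻¹ else 0)
    (L : ℝ → ℝ → ℝ) (hL : ∀ x y, L x y = s⁻¹ * ∑ k ∈ Finset.range n, e k x * e k y)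
    (a r : ℝ) (hr : 0 < r) :
    |(∫ y in {y : ℝ | r / s ^ 2 ≤ |a - y|},
          (1 / (s ^ 2 * |a - y| ^ 2)) * (L a y ^ 2 / L a a)) +
        (∫ y in {y : ℝ | r / s ^ 2 ≤ |a - y|},
          ∫ z in {z : ℝ | r / s ^ 2 ≤ |a - z|},
            (1 / ((a - y) * (a - z))) *
              (2 * L y z * L a y * L a z / L a a - L a y ^ 2 * L a z ^ 2 / L a a ^ 2))|
      ≤ 4 / r ^ 2 := by
  set T : Set ℝ := {y : ℝ | r / s ^ 2 ≤ |a - y|} with hT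
  have hTm : MeasurableSet T := measurableSet_le measurable_const (by fun_prop)
  set g : ℝ → ℝ := T.indicator (fun y => (a - y)⁻¹) with hg
  have hgm : Measurable g := Measurable.indicator (by fun_prop) hTm
  have hgb : ∀ y, |g y| ≤ s ^ 2 / r := by
    intro y
    by_cases hy : y ∈ T
    · rw [hg, indicator_of_mem hy, abs_inv]
      have h1 : r / s ^ 2 ≤ |a - y| := hy
      have := inv_anti₀ (by positivity) h1
      rwa [inv_div] at this
    · rw [hg, indicator_of_notMem hy, abs_zero]; positivity
  -- the kernel
  have hLm : Measurable (L a) := by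
    have : L a = fun y => s⁻¹ * ∑ k ∈ Finset.range n, e k a * e k y := funext (hL a)
    rw [this]
    exact (Finset.measurable_sum _ fun k _ => (hm k).const_mul _).const_mul _
  have hLe : ∀ k, Integrable (fun y => L a y * e k y) := by
    intro k
    have : (fun y => L a y * e k y) =
        fun y => s⁻¹ * ∑ j ∈ Finset.range n, e j a * (e j y * e k y) := by
      ext y
      rw [hL, mul_assoc, Finset.sum_mul]
      simp only [mul_assoc]
    rw [this]
    exact (integrable_finsetSum _ fun j _ => (hi j k).const_mul _).const_mul _
  have hLei : ∀ k ∈ Finset.range n, ∫ y, L a y * e k y = (s ^ 2)⁻¹ * e k a := by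
    intro k hk
    have : (fun y => L a y * e k y) =
        fun y => s⁻¹ * ∑ j ∈ Finset.range n, e j a * (e j y * e k y) := by
      ext y
      rw [hL, mul_assoc, Finset.sum_mul]
      simp only [mul_assoc]
    rw [this, integral_const_mul, integral_finsetSum _ (fun j _ => (hi j k).const_mul _)]
    simp only [integral_const_mul, ho, mul_ite, mul_zero, Finset.sum_ite_eq', hk, if_true]
    field_simp
  have hLLeq : (fun y => L a y ^ 2) =
      fun y => s⁻¹ * ∑ k ∈ Finset.range n, e k a * (L a y * e k y) := by
    ext y
    rw [sq]
    nth_rewrite 2 [hL]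
    rw [mul_left_comm, Finset.mul_sum]
    congr 1
    exact Finset.sum_congr rfl fun _ _ => by ring
  have hLL : Integrable (fun y => L a y ^ 2) := by
    rw [hLLeq]
    exact (integrable_finsetSum _ fun j _ => (hLe j).const_mul _).const_mul _
  have hLLi : ∫ y, L a y ^ 2 = (s ^ 2)⁻¹ * L a a := by
    rw [hLLeq, integral_const_mul, integral_finsetSum _ (fun j _ => (hLe j).const_mul _), hL,
      Finset.mul_sum, Finset.mul_sum, Finset.mul_sum]
    refine Finset.sum_congr rfl fun k hk => ?_
    rw [integral_const_mul, hLei k hk]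
    ring
  have hLaa : 0 ≤ L a a := by
    rw [hL]
    exact mul_nonneg (inv_nonneg.2 hs.le) (Finset.sum_nonneg fun k _ => mul_self_nonneg _)
  have hgbound : ∀ u : ℝ → ℝ, Integrable u → Integrable (fun y => g y * u y) := fun u hu =>
    hu.bdd_mul hgm.aestronglyMeasurable (Eventually.of_forall hgb)
  -- f
  set f : ℝ → ℝ := fun y => g y * L a y with hf
  have hffeq : (fun y => f y * f y) = fun y => g y * (g y * L a y ^ 2) := by
    ext y; simp only [hf]; ring
  have hff : Integrable (fun y => f y * f y) := by
    rw [hffeq]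
    exact hgbound _ (hgbound _ hLL)
  have hfe : ∀ k, Integrable (fun y => f y * e k y) := by
    intro k
    simp only [hf, mul_assoc]
    exact hgbound _ (hLe k)
  have hF : Integrable (fun y => g y * L a y ^ 2) := hgbound _ hLL
  set A : ℝ := ∫ y, f y * f y with hA
  set B : ℝ := ∫ y, g y * L a y ^ 2 with hB
  set c : ℕ → ℝ := fun k => ∫ y, f y * e k y with hc
  have hA0 : 0 ≤ A := integral_nonneg fun y => mul_self_nonneg _
  have hA1 : A ≤ s ^ 2 / r ^ 2 * L a a := by
    have : A ≤ ∫ y, (s ^ 2 / r) ^ 2 * L a y ^ 2 := by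
      refine integral_mono hff (hLL.const_mul _) fun y => ?_
      have : f y * f y = |g y| ^ 2 * L a y ^ 2 := by
        rw [sq_abs]; simp only [hf]; ring
      show f y * f y ≤ _
      rw [this]
      have := hgb y
      gcongr
    rw [integral_const_mul, hLLi] at this
    refine this.trans_eq ?_
    field_simp
  have hB1 : |B| ≤ r⁻¹ * L a a := by
    have : ‖B‖ ≤ ∫ y, (s ^ 2 / r) * L a y ^ 2 := by
      refine norm_integral_le_of_norm_le (hLL.const_mul _) (Eventually.of_forall fun y => ?_)
      rw [Real.norm_eq_abs, abs_mul, abs_of_nonneg (sq_nonneg (L a y))]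
      have := hgb y
      gcongr
    rw [integral_const_mul, hLLi, Real.norm_eq_abs] at this
    refine this.trans_eq ?_
    field_simp
  have hbes : s * ∑ k ∈ Finset.range n, c k ^ 2 ≤ A := bessel n e s hs hi ho f hff hfe
  -- first integral
  have h1 : (∫ y in T, (1 / (s ^ 2 * |a - y| ^ 2)) * (L a y ^ 2 / L a a)) =
      A / (s ^ 2 * L a a) := by
    rw [← integral_indicator hTm, hA, ← integral_div]
    congr 1
    ext y
    by_cases hy : y ∈ T
    · simp only [hf, hg, indicator_of_mem hy, sq_abs]
      generalize a - y = w
      simp only [div_eq_mul_inv, mul_inv, inv_pow]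
      ring
    · simp only [hf, hg, indicator_of_notMem hy]
      simp
  have h2 : (∫ y in T, ∫ z in T, (1 / ((a - y) * (a - z))) *
              (2 * L y z * L a y * L a z / L a a - L a y ^ 2 * L a z ^ 2 / L a a ^ 2)) =
      2 * (s⁻¹ * ∑ k ∈ Finset.range n, c k ^ 2) / L a a - B ^ 2 / L a a ^ 2 := by
    have hin : ∀ y, T.indicator (fun y => ∫ z in T, (1 / ((a - y) * (a - z))) *
              (2 * L y z * L a y * L a z / L a a - L a y ^ 2 * L a z ^ 2 / L a a ^ 2)) y =
        (∑ k ∈ Finset.range n, (2 * s⁻¹ / L a a * c k) * (f y * e k y)) -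
          (B / L a a ^ 2) * (g y * L a y ^ 2) := by
      intro y
      by_cases hy : y ∈ T
      · rw [indicator_of_mem hy, ← integral_indicator hTm]
        have : (T.indicator fun z => (1 / ((a - y) * (a - z))) *
              (2 * L y z * L a y * L a z / L a a - L a y ^ 2 * L a z ^ 2 / L a a ^ 2)) =
            fun z => (∑ k ∈ Finset.range n, (2 * s⁻¹ / L a a * (f y * e k y)) * (f z * e k z)) -
              (g y * L a y ^ 2 / L a a ^ 2) * (g z * L a z ^ 2) := by
          ext z
          have hsum : (∑ k ∈ Finset.range n, (2 * s⁻¹ / L a a * (f y * e k y)) * (f z * e k z)) =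
              2 / L a a * f y * f z * L y z := by
            rw [hL y z, Finset.mul_sum, Finset.mul_sum]
            exact Finset.sum_congr rfl fun _ _ => by ring
          rw [hsum]
          by_cases hz : z ∈ T
          · simp only [hf, hg, indicator_of_mem hy, indicator_of_mem hz]
            simp only [div_eq_mul_inv, mul_inv]
            ring
          · simp only [hf, hg, indicator_of_notMem hz]
            simp
        rw [this, integral_sub (integrable_finsetSum _ fun k _ => (hfe k).const_mul _)
          (hF.const_mul _), integral_finsetSum _ (fun k _ => (hfe k).const_mul _)]
        simp only [integral_const_mul]
        congr 1
        · exact Finset.sum_congr rfl fun k _ => by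
            show _ * c k = _
            ring
        · show _ * B = _
          ring
      · rw [indicator_of_notMem hy]
        simp only [hf, hg, indicator_of_notMem hy]
        simp
    rw [← integral_indicator hTm]
    simp only [hin]
    rw [integral_sub (integrable_finsetSum _ fun k _ => (hfe k).const_mul _)
          (hF.const_mul _), integral_finsetSum _ (fun k _ => (hfe k).const_mul _)]
    simp only [integral_const_mul]
    congr 1
    · rw [Finset.mul_sum, Finset.mul_sum, Finset.sum_div]
      exact Finset.sum_congr rfl fun k _ => by
        show _ * c k = _
        ring
    · show _ * B = _
      ring
  rw [h1, h2]
  rcases hLaa.eq_or_lt with h0 | hpos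
  · rw [← h0]
    simp
    positivity
  have b1 : A / (s ^ 2 * L a a) ≤ 1 / r ^ 2 := by
    rw [div_le_iff₀ (by positivity)]
    refine hA1.trans_eq ?_
    field_simp
  have b1' : 0 ≤ A / (s ^ 2 * L a a) := by positivity
  have b2 : 2 * (s⁻¹ * ∑ k ∈ Finset.range n, c k ^ 2) / L a a ≤ 2 * (1 / r ^ 2) := by
    refine le_trans ?_ (mul_le_mul_of_nonneg_left b1 zero_le_two)
    rw [mul_div_assoc]
    refine mul_le_mul_of_nonneg_left ?_ zero_le_two
    rw [div_le_div_iff₀ hpos (by positivity)]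
    have : s⁻¹ * (∑ k ∈ Finset.range n, c k ^ 2) * (s ^ 2 * L a a) =
        (s * ∑ k ∈ Finset.range n, c k ^ 2) * L a a := by
      field_simp
    rw [this]
    exact mul_le_mul_of_nonneg_right hbes hpos.le
  have b2' : 0 ≤ 2 * (s⁻¹ * ∑ k ∈ Finset.range n, c k ^ 2) / L a a := by
    have : 0 ≤ ∑ k ∈ Finset.range n, c k ^ 2 := Finset.sum_nonneg fun _ _ => sq_nonneg _
    positivity
  have b3 : B ^ 2 / L a a ^ 2 ≤ 1 / r ^ 2 := by
    rw [div_le_iff₀ (by positivity), ← sq_abs]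
    calc |B| ^ 2 ≤ (r⁻¹ * L a a) ^ 2 := by gcongr
      _ = _ := by field_simp
  have b3' : 0 ≤ B ^ 2 / L a a ^ 2 := by positivity
  have b4 : 4 / r ^ 2 = 4 * (1 / r ^ 2) := by ring
  rw [b4, abs_le]
  constructor <;> linarith

/-- Palm variance correction estimate (Lemma 4.7). -/
theorem palm_variance_correction (θ : ℝ) (hθ1 : -Real.sqrt 2 < θ) (hθ2 : θ < Real.sqrt 2)
    (R : ℕ) (hR : 1 ≤ R) :
    ∀ ε : ℝ, 0 < ε → ∃ r0 : ℝ, ∀ r : ℝ, r0 ≤ r → ∃ N0 : ℕ, ∀ N : ℕ, N0 ≤ N →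
      ∀ x : ℝ, |x| < (R : ℝ) →
      |(∫ y in {y : ℝ | r / (N : ℝ) ≤ |x / (N : ℝ) + θ - y|},
          (1 / ((N : ℝ) * |x / (N : ℝ) + θ - y| ^ 2)) *
            (kerL N (x / (N : ℝ) + θ) y ^ 2 /
              kerL N (x / (N : ℝ) + θ) (x / (N : ℝ) + θ))) +
        (∫ y in {y : ℝ | r / (N : ℝ) ≤ |x / (N : ℝ) + θ - y|},
          ∫ z in {z : ℝ | r / (N : ℝ) ≤ |x / (N : ℝ) + θ - z|},
            (1 / ((x / (N : ℝ) + θ - y) * (x / (N : ℝ) + θ - z))) *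
              (2 * kerL N y z * kerL N (x / (N : ℝ) + θ) y * kerL N (x / (N : ℝ) + θ) z /
                  kerL N (x / (N : ℝ) + θ) (x / (N : ℝ) + θ) -
                kerL N (x / (N : ℝ) + θ) y ^ 2 * kerL N (x / (N : ℝ) + θ) z ^ 2 /
                  kerL N (x / (N : ℝ) + θ) (x / (N : ℝ) + θ) ^ 2))| < ε := by
  intro ε hε
  refine ⟨max 1 (5 / ε), fun r hr => ⟨1, fun N hN x _ => ?_⟩⟩
  have hr1 : 1 ≤ r := (le_max_left _ _).trans hr
  have hr2 : 5 / ε ≤ r := (le_max_right _ _).trans hr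
  have hN0 : (0 : ℝ) < N := by exact_mod_cast hN
  have hs : 0 < Real.sqrt (N : ℝ) := Real.sqrt_pos.2 hN0
  have key := abstract_bound N (fun k y => osc k (Real.sqrt (N : ℝ) * y)) (Real.sqrt (N : ℝ)) hs
    (fun k => ((osc_continuous k).comp (continuous_const.mul continuous_id)).measurable)
    (fun j k => (osc_integrable j k).comp_mul_left' hs.ne')
    (fun j k => by
      have := Measure.integral_comp_mul_left (fun x => osc j x * osc k x) (Real.sqrt (N : ℝ))
      rw [this, osc_integral, abs_of_pos (inv_pos.2 hs)]
      simp)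
    (kerL N) (fun _ _ => rfl) (x / (N : ℝ) + θ) r (by linarith)
  rw [Real.sq_sqrt hN0.le] at key
  refine key.trans_lt ?_
  rw [div_lt_iff₀ (by positivity)]
  rw [div_le_iff₀ hε] at hr2
  nlinarith
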